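/- Let N ≥ 1 and let A be an N×N matrix over ℂ with det A ≠ 0. Suppose α_1, …, α_n are pairwise distinct nonzero complex numbers and e_1, …, e_n ≥ 1 are integers such that det(E − A·z) = (−1)^N · det A · Π_{k=1}^n (z − α_k)^{e_k} as polynomials in z, and suppose A_{k,j} (for 1 ≤ k ≤ n, 1 ≤ j ≤ e_k) are complex numbers such that for every complex z ∉ {α_1, …, α_n}: sum(adj(E − A·z)·A)/det(E − A·z) = (1/((−1)^N det A)) · Σ_{k=1}^n Σ_{j=1}^{e_k} A_{k,j}/(z − α_k)^j. Then for every complex number z with |z| < min_{1≤k≤n} |α_k|, the series Σ_{m=1}^∞ (sum(A^m)/m) z^m converges and exp(Σ_{m=1}^∞ (sum(A^m)/m) z^m) = Π_{k=1}^n (1 − z/α_k)^{A_{k,1}/((−1)^N det A)} · exp( (1/((−1)^N det A)) · Σ_{k=1}^n Σ_{j=1}^{e_k−1} (z^j/(j·(1 − z/α_k)^j)) · (Σ_{i=j}^{e_k−1} binom(i−1, j−1) · (−1)^{i−1} · (1/α_k)^{i+j} · A_{k,i+1}) ), where the complex power (1 − z/α_k)^w is taken with the principal branch. -/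

import Mathlib

open Polynomial Matrix

/-!
Near the origin the Neumann series of `(1 - z A)⁻¹` shows that the rational function
`sum(adj(1 - z A) A) / det(1 - z A)` is the derivative of `∑ (sum(Aᵐ) / m) zᵐ`. The partial
fraction decomposition is integrated term by term: a simple pole gives a logarithm, and a
higher-order pole is integrated after the substitution `u = z / (1 - z / a)`, for which
`du/dz = (1 - z / a)⁻²` and `1 + u / a = (1 - z / a)⁻¹`, so that the binomial theorem applies. The
resulting primitive is holomorphic on the disc below the smallest `|α k|`, hence its Taylor series
converges to it there.
-/

section Primitives

open Finset

lemma sum_Icc_one_eq_sum_range {M : Type*} [AddCommMonoid M] (f : ℕ → M) (n : ℕ) :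
    ∑ j ∈ Icc 1 n, f j = ∑ j ∈ range n, f (j + 1) := by
  rw [range_eq_Ico, sum_Ico_add', zero_add, Ico_add_one_right_eq_Icc]

section NormedField

variable {𝕜 : Type*} [NontriviallyNormedField 𝕜]

lemma hasDerivAt_one_sub_div (a z : 𝕜) : HasDerivAt (fun w ↦ 1 - w / a) (-(1 / a)) z :=
  ((hasDerivAt_id z).div_const a).const_sub 1

lemma hasDerivAt_div_one_sub_div {a z : 𝕜} (hz : 1 - z / a ≠ 0) :
    HasDerivAt (fun w ↦ w / (1 - w / a)) (1 / (1 - z / a) ^ 2) z := by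
  refine ((hasDerivAt_id z).div (hasDerivAt_one_sub_div a z) hz).congr_deriv ?_
  simp only [id]
  ring

/-- The primitive of `(z - a)⁻⁽ⁱ⁺¹⁾` vanishing at `0`, for `1 ≤ i` and `a ≠ 0`, expanded in powers
of `z / (1 - z / a)`. -/
noncomputable def polePrimitive (a : 𝕜) (i : ℕ) (z : 𝕜) : 𝕜 :=
  ∑ j ∈ Icc 1 i, z ^ j / (j * (1 - z / a) ^ j) *
    ((i - 1).choose (j - 1) * (-1) ^ (i - 1) * (1 / a) ^ (i + j))

@[simp]
lemma polePrimitive_zero (a : 𝕜) (i : ℕ) : polePrimitive a i 0 = 0 :=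
  sum_eq_zero fun j hj ↦ by
    rw [zero_pow (Nat.one_le_iff_ne_zero.1 (mem_Icc.1 hj).1), zero_div, zero_mul]

lemma polePrimitive_succ (a : 𝕜) (i : ℕ) (z : 𝕜) :
    polePrimitive a (i + 1) z = ∑ j ∈ range (i + 1), (z / (1 - z / a)) ^ (j + 1) / (j + 1 : ℕ) *
      (i.choose j * (-1) ^ i * (1 / a) ^ (i + 1 + (j + 1))) := by
  simp_rw [polePrimitive, sum_Icc_one_eq_sum_range, add_tsub_cancel_right, div_pow, div_div,
    mul_comm]

lemma hasDerivAt_polePrimitive [CharZero 𝕜] {a z : 𝕜} (ha : a ≠ 0) (hz : z ≠ a) {i : ℕ}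
    (hi : 1 ≤ i) : HasDerivAt (polePrimitive a i) (1 / (z - a) ^ (i + 1)) z := by
  obtain ⟨i, rfl⟩ := Nat.exists_eq_add_of_le' hi
  set v := 1 - z / a with hv
  have hv0 : v ≠ 0 := by rwa [hv, sub_ne_zero, ne_comm, Ne, div_eq_one_iff_eq ha]
  have hterm (j : ℕ) : HasDerivAt
      (fun w ↦ (w / (1 - w / a)) ^ (j + 1) / (j + 1 : ℕ) *
        (i.choose j * (-1) ^ i * (1 / a) ^ (i + 1 + (j + 1))))
      ((z / v / a) ^ j * i.choose j * ((-1) ^ i * (1 / a) ^ (i + 2) / v ^ 2)) z := by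
    refine ((((hasDerivAt_div_one_sub_div hv0).fun_pow (j + 1)).div_const _).mul_const
      _).congr_deriv ?_
    have hj0 : ((j + 1 : ℕ) : 𝕜) ≠ 0 := Nat.cast_ne_zero.2 j.succ_ne_zero
    rw [← hv, Nat.add_sub_cancel, mul_assoc, mul_div_cancel_left₀ _ hj0]
    ring
  have hbinom : ∑ j ∈ range (i + 1), (z / v / a) ^ j * i.choose j = (1 / v) ^ i := by
    have hone : 1 / v = z / v / a + 1 := by
      rw [div_right_comm, div_add_one hv0, hv, add_sub_cancel]
    simp [hone, add_pow]
  have hpole : 1 / (z - a) = -(1 / a) * (1 / v) := by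
    rw [← neg_sub a z, show a - z = a * v by rw [hv, mul_sub, mul_one, mul_div_cancel₀ _ ha]]
    field_simp
  rw [_root_.funext (polePrimitive_succ a i)]
  refine (HasDerivAt.fun_sum fun j _ ↦ hterm j).congr_deriv ?_
  rw [← sum_mul, hbinom, ← _root_.one_div_pow, hpole]
  clear_value v
  ring

end NormedField

lemma one_sub_div_mem_slitPlane {a z : ℂ} (h : ‖z‖ < ‖a‖) : 1 - z / a ∈ Complex.slitPlane := by
  rw [sub_eq_add_neg]
  refine Complex.mem_slitPlane_of_norm_lt_one ?_
  rwa [norm_neg, norm_div, div_lt_one ((norm_nonneg z).trans_lt h)]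

/-- The primitive of the principal part `∑ j ∈ Icc 1 e, b j / (z - a) ^ j` on the disc `‖z‖ < ‖a‖`
vanishing at `0`, for `1 ≤ e`. -/
noncomputable def principalPartPrimitive (a : ℂ) (e : ℕ) (b : ℕ → ℂ) (z : ℂ) : ℂ :=
  b 1 * Complex.log (1 - z / a) + ∑ i ∈ Icc 1 (e - 1), b (i + 1) * polePrimitive a i z

@[simp]
lemma principalPartPrimitive_zero (a : ℂ) (e : ℕ) (b : ℕ → ℂ) :
    principalPartPrimitive a e b 0 = 0 := by
  simp [principalPartPrimitive]

lemma hasDerivAt_principalPartPrimitive {a z : ℂ} (hz : ‖z‖ < ‖a‖) {e : ℕ} (he : 1 ≤ e)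
    (b : ℕ → ℂ) :
    HasDerivAt (principalPartPrimitive a e b) (∑ j ∈ Icc 1 e, b j / (z - a) ^ j) z := by
  have ha : a ≠ 0 := norm_pos_iff.1 ((norm_nonneg z).trans_lt hz)
  have hza : z ≠ a := by rintro rfl; exact hz.false
  have hlog : HasDerivAt (fun w ↦ Complex.log (1 - w / a)) (1 / (z - a)) z := by
    refine ((hasDerivAt_one_sub_div a z).clog (one_sub_div_mem_slitPlane hz)).congr_deriv ?_
    rw [← neg_sub a z, one_sub_div ha]
    field_simp
  have hpoles := HasDerivAt.fun_sum fun i (hi : i ∈ Icc 1 (e - 1)) ↦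
    (hasDerivAt_polePrimitive ha hza (mem_Icc.1 hi).1).const_mul (b (i + 1))
  refine ((hlog.const_mul (b 1)).add hpoles).congr_deriv ?_
  obtain ⟨e, rfl⟩ := Nat.exists_eq_add_of_le' he
  simp_rw [mul_one_div]
  rw [add_tsub_cancel_right, sum_Icc_one_eq_sum_range, sum_Icc_one_eq_sum_range, sum_range_succ',
    add_comm]
  simp

lemma exp_principalPartPrimitive {a z : ℂ} (hz : ‖z‖ < ‖a‖) (e : ℕ) (b : ℕ → ℂ) :
    Complex.exp (principalPartPrimitive a e b z) = (1 - z / a) ^ b 1 *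
      Complex.exp (∑ j ∈ Icc 1 (e - 1), z ^ j / (j * (1 - z / a) ^ j) *
        ∑ i ∈ Icc j (e - 1),
          ((i - 1).choose (j - 1) : ℂ) * (-1) ^ (i - 1) * (1 / a) ^ (i + j) * b (i + 1)) := by
  have hswap : ∑ i ∈ Icc 1 (e - 1), b (i + 1) * polePrimitive a i z =
      ∑ j ∈ Icc 1 (e - 1), z ^ j / (j * (1 - z / a) ^ j) * ∑ i ∈ Icc j (e - 1),
        ((i - 1).choose (j - 1) : ℂ) * (-1) ^ (i - 1) * (1 / a) ^ (i + j) * b (i + 1) := by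
    simp_rw [polePrimitive, mul_sum]
    rw [sum_comm' (t' := Icc 1 (e - 1)) (s' := fun j ↦ Icc j (e - 1))
      (by simp only [mem_Icc]; omega)]
    exact sum_congr rfl fun j _ ↦ sum_congr rfl fun i _ ↦ by ring
  rw [principalPartPrimitive, hswap, Complex.exp_add, mul_comm (b 1),
    Complex.cpow_def_of_ne_zero (Complex.slitPlane_ne_zero (one_sub_div_mem_slitPlane hz))]

end Primitives

section Series

open Topology

lemma hasSum_of_hasDerivAt_of_hasFPowerSeriesAt {E : Type*} [NormedAddCommGroup E]
    [NormedSpace ℂ E] [CompleteSpace E] {F G : ℂ → E} {p : FormalMultilinearSeries ℂ ℂ E} {c : ℂ}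
    {R : ℝ} (hF : ∀ w ∈ Metric.ball c R, HasDerivAt F (G w) w) (hG : HasFPowerSeriesAt G p c)
    {z : ℂ} (hz : z ∈ Metric.ball c R) :
    HasSum (fun m : ℕ ↦ ((z - c) ^ (m + 1) / (m + 1)) • p.coeff m) (F z - F c) := by
  have hderiv : deriv F =ᶠ[𝓝 c] G := by
    filter_upwards [Metric.ball_mem_nhds c (Metric.pos_of_mem_ball hz)] with w hw
    exact (hF w hw).deriv
  have hcoeff (m : ℕ) : iteratedDeriv (m + 1) F c = (m.factorial : ℂ) • p.coeff m := by
    obtain ⟨r, hr⟩ := hG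
    rw [iteratedDeriv_succ', hderiv.iteratedDeriv_eq, iteratedDeriv, ← hr.factorial_smul,
      Nat.cast_smul_eq_nsmul]
    rfl
  have htaylor := Complex.hasSum_taylorSeries_on_ball
    (fun w hw ↦ (hF w hw).differentiableAt.differentiableWithinAt) hz
  rw [← hasSum_nat_add_iff' 1] at htaylor
  convert htaylor using 1
  · ext m
    rw [hcoeff, smul_smul, smul_smul, Nat.factorial_succ]
    congr 1
    have hm : (m.factorial : ℂ) ≠ 0 := by exact_mod_cast m.factorial_ne_zero
    push_cast
    field_simp
  · simp

lemma hasFPowerSeriesAt_linearMap_inverse_one_sub_smul_mul {𝕜 R : Type*}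
    [NontriviallyNormedField 𝕜] [CompleteSpace 𝕜] [NormedRing R] [NormedAlgebra 𝕜 R]
    [FiniteDimensional 𝕜 R] (L : R →ₗ[𝕜] 𝕜) (a : R) :
    HasFPowerSeriesAt (fun z : 𝕜 ↦ L (Ring.inverse (1 - z • a) * a))
      (.ofScalars 𝕜 fun m ↦ L (a ^ (m + 1))) 0 := by
  have := FiniteDimensional.complete 𝕜 R
  rw [hasFPowerSeriesAt_iff]
  filter_upwards [(spectrum.hasFPowerSeriesOnBall_inverse_one_sub_smul 𝕜
    a).hasFPowerSeriesAt.eventually_hasSum] with z hz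
  simpa [pow_succ, FormalMultilinearSeries.coeff_ofScalars] using
    L.toContinuousLinearMap.hasSum (hz.mul_right a)

attribute [local instance] Matrix.linftyOpNormedRing Matrix.linftyOpNormedAlgebra

lemma hasFPowerSeriesAt_sum_adjugate_mul_div_det {ι 𝕜 : Type*} [Fintype ι] [DecidableEq ι]
    [NontriviallyNormedField 𝕜] [CompleteSpace 𝕜] (A : Matrix ι ι 𝕜) :
    HasFPowerSeriesAt (fun z : 𝕜 ↦
        (∑ i, ∑ j, (adjugate (1 - z • A) * A : Matrix ι ι 𝕜) i j) / det (1 - z • A))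
      (.ofScalars 𝕜 fun m ↦ ∑ i, ∑ j, (A ^ (m + 1)) i j) 0 := by
  simpa [← nonsing_inv_eq_ringInverse, inv_def, ← Finset.mul_sum, div_eq_inv_mul] using
    hasFPowerSeriesAt_linearMap_inverse_one_sub_smul_mul
      (∑ i, ∑ j, entryLinearMap 𝕜 𝕜 i j) A

end Series

open Topology in
theorem zeta_function_closed_formula_general {ι κ : Type*} [Fintype ι] [DecidableEq ι] [Fintype κ]
    (A : Matrix ι ι ℂ) (α : κ → ℂ) (e : κ → ℕ) (he : ∀ k, 1 ≤ e k) (b : κ → ℕ → ℂ)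
    (hpart : ∀ᶠ z in 𝓝 (0 : ℂ),
      (∑ i, ∑ j, (adjugate (1 - z • A) * A : Matrix ι ι ℂ) i j) / det (1 - z • A) =
        ∑ k, ∑ j ∈ Finset.Icc 1 (e k), b k j / (z - α k) ^ j)
    {z : ℂ} (hz : ∀ k, ‖z‖ < ‖α k‖) :
    Summable (fun m : ℕ ↦ (∑ i, ∑ j, (A ^ (m + 1)) i j) / (m + 1 : ℂ) * z ^ (m + 1)) ∧
    Complex.exp (∑' m : ℕ, (∑ i, ∑ j, (A ^ (m + 1)) i j) / (m + 1 : ℂ) * z ^ (m + 1)) =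
      (∏ k, (1 - z / α k) ^ b k 1) *
        Complex.exp (∑ k, ∑ j ∈ Finset.Icc 1 (e k - 1), z ^ j / (j * (1 - z / α k) ^ j) *
          ∑ i ∈ Finset.Icc j (e k - 1),
            ((i - 1).choose (j - 1) : ℂ) * (-1) ^ (i - 1) * (1 / α k) ^ (i + j) *
              b k (i + 1)) := by
  obtain ⟨R, hzR, hR⟩ := (eventually_mem_nhdsWithin.and
    (Filter.eventually_all.2 fun k ↦ Ioo_mem_nhdsGT (hz k))).exists
  have hderiv : ∀ w ∈ Metric.ball (0 : ℂ) R,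
      HasDerivAt (fun w ↦ ∑ k, principalPartPrimitive (α k) (e k) (b k) w)
        (∑ k, ∑ j ∈ Finset.Icc 1 (e k), b k j / (w - α k) ^ j) w := fun w hw ↦
    HasDerivAt.fun_sum fun k _ ↦ hasDerivAt_principalPartPrimitive
      ((mem_ball_zero_iff.1 hw).trans (hR k).2) (he k) (b k)
  have hseries : HasSum (fun m : ℕ ↦ (∑ i, ∑ j, (A ^ (m + 1)) i j) / (m + 1 : ℂ) * z ^ (m + 1))
      (∑ k, principalPartPrimitive (α k) (e k) (b k) z) := by
    simpa [FormalMultilinearSeries.coeff_ofScalars, div_mul_eq_mul_div, mul_comm,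
      mul_div_assoc] using hasSum_of_hasDerivAt_of_hasFPowerSeriesAt hderiv
      ((hasFPowerSeriesAt_sum_adjugate_mul_div_det A).congr hpart) (mem_ball_zero_iff.2 hzR)
  refine ⟨hseries.summable, ?_⟩
  rw [hseries.tsum_eq, Complex.exp_sum, Complex.exp_sum, ← Finset.prod_mul_distrib]
  exact Finset.prod_congr rfl fun k _ ↦ exp_principalPartPrimitive (hz k) (e k) (b k)

/-- With the same hypotheses as in the partial fraction setup
(`det A ≠ 0`, factorization of `det(E - A·z)`, partial fraction decomposition of
`sum(adj(E - A·z)·A)/det(E - A·z)` with coefficients `A_{k,j}`), for every complex `z`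
with `|z| < min_k |α_k|` the series `Σ_{m=1}^∞ (sum(A^m)/m) z^m` converges and the zeta
function `exp(Σ_{m=1}^∞ (sum(A^m)/m) z^m)` equals the closed product/exponential formula,
where `(1 - z/α_k)^w` is the principal-branch complex power. -/
theorem zeta_function_closed_formula
    (N n : ℕ) (hN : 1 ≤ N) (A : Matrix (Fin N) (Fin N) ℂ) (hA : A.det ≠ 0)
    (α : Fin n → ℂ) (hα : ∀ k, α k ≠ 0) (hinj : Function.Injective α)
    (e : Fin n → ℕ) (he : ∀ k, 1 ≤ e k)
    (hfact : Matrix.det ((1 : Matrix (Fin N) (Fin N) ℂ[X]) -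
        (Polynomial.X : ℂ[X]) • A.map Polynomial.C) =
      Polynomial.C ((-1) ^ N * A.det) *
        ∏ k, (Polynomial.X - Polynomial.C (α k)) ^ (e k))
    (B : Fin n → ℕ → ℂ)
    (hpart : ∀ z : ℂ, (∀ k, z ≠ α k) →
      (∑ i, ∑ j, (Matrix.adjugate ((1 : Matrix (Fin N) (Fin N) ℂ) - z • A) * A) i j) /
          Matrix.det ((1 : Matrix (Fin N) (Fin N) ℂ) - z • A) =
        (1 / ((-1) ^ N * A.det)) *
          ∑ k, ∑ j ∈ Finset.Icc 1 (e k), B k j / (z - α k) ^ j)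
    (z : ℂ) (hz : ∀ k, ‖z‖ < ‖α k‖) :
    Summable (fun m : ℕ =>
      (∑ i, ∑ j, (A ^ (m + 1)) i j) / (m + 1 : ℂ) * z ^ (m + 1)) ∧
    Complex.exp (∑' m : ℕ,
        (∑ i, ∑ j, (A ^ (m + 1)) i j) / (m + 1 : ℂ) * z ^ (m + 1)) =
      (∏ k, (1 - z / α k) ^ (B k 1 / ((-1) ^ N * A.det))) *
        Complex.exp ((1 / ((-1) ^ N * A.det)) *
          ∑ k, ∑ j ∈ Finset.Icc 1 (e k - 1),
            z ^ j / (j * (1 - z / α k) ^ j) *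
              ∑ i ∈ Finset.Icc j (e k - 1),
                ((i - 1).choose (j - 1) : ℂ) * (-1) ^ (i - 1) * (1 / α k) ^ (i + j) *
                  B k (i + 1)) := by
  have hpoles : ∀ᶠ w in nhds (0 : ℂ), ∀ k, w ≠ α k :=
    Filter.eventually_all.2 fun k ↦ isOpen_ne.mem_nhds (hα k).symm
  have := zeta_function_closed_formula_general A α e he (fun k j ↦ 1 / ((-1) ^ N * A.det) * B k j)
    (hpoles.mono fun w hw ↦ by simp_rw [hpart w hw, Finset.mul_sum, mul_div_assoc]) hz
  simpa only [Finset.mul_sum, one_div_mul_eq_div, mul_div_assoc'] using this
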